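/- Let μ be a probability measure on B̄₁(0) ⊆ ℝ^m with barycenter 0 and second moment form Q with eigenvalue λ_k and unit eigenvector v_k, and let u ∈ W^{1,2}(B₁₀(0), ℝ^ℓ). Then there exists a dimensional constant C(m) such that λ_k ∫_{B₄(0)∖B₃(0)} |v_k·∇u(z)|² dz ≤ C(m) ∫ W₁(x) dμ(x), where W₁(x) = ∫_{B₁₀(x)∖B₁(x)} |(y-x)·∇u(y)|² |y-x|^{-m} dy. -/

import Mathlib

open MeasureTheory
open scoped RealInnerProductSpace

/-!
Write `L` for the derivative of `u` at `z`. Since `μ` is centred and `v` is an eigenvector of the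
second-moment form, `∫ ⟪x, v⟫ • (x - z) ∂μ = lam • v` for every `z`, so `lam • L v` is the
`⟪x, v⟫`-weighted mean of `L (x - z)`. Cauchy–Schwarz and `∫ ⟪x, v⟫ ^ 2 ∂μ = lam` then give the
pointwise inequality `lam * ‖L v‖ ^ 2 ≤ ∫ ‖L (z - x)‖ ^ 2 ∂μ` (`eigen_mul_norm_sq_le`). It is
integrated over the annulus `B₄ ∖ B₃` and the order of integration is exchanged. For `‖x‖ ≤ 1` this
annulus lies in `B₁₀(x) ∖ B₁(x)`, where the weight `‖z - x‖ ^ (-m)` is at least `10 ^ (-m)`, so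
`C = 10 ^ m` works.
-/

lemma integrable_of_continuous_of_ball_compl_null {m : ℕ}
    {μ : Measure (EuclideanSpace ℝ (Fin m))} [IsFiniteMeasure μ]
    (hsupp : ∀ᵐ x ∂μ, ‖x‖ ≤ 1) {f : EuclideanSpace ℝ (Fin m) → ℝ} (hf : Continuous f) :
    Integrable f μ := by
  obtain ⟨B, hB⟩ := (isCompact_closedBall (0 : EuclideanSpace ℝ (Fin m)) 1).exists_bound_of_continuousOn
    hf.continuousOn
  refine Integrable.of_bound hf.aestronglyMeasurable B ?_
  filter_upwards [hsupp] with x hx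
  exact hB x (by simpa using hx)

/-- The pointwise Cauchy–Schwarz inequality, obtained by integrating
`0 ≤ ‖L (z - x) + ⟪x, v⟫ • L v‖ ^ 2` over `x`; this form of the argument needs no division
by `lam`. -/
lemma eigen_mul_norm_sq_le {m l : ℕ}
    {μ : Measure (EuclideanSpace ℝ (Fin m))} [IsProbabilityMeasure μ]
    (hsupp : ∀ᵐ x ∂μ, ‖x‖ ≤ 1)
    (hbar : (∫ x, x ∂μ) = (0 : EuclideanSpace ℝ (Fin m)))
    {lam : ℝ} {v : EuclideanSpace ℝ (Fin m)} (hv : ‖v‖ = 1)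
    (hQ : ∀ w : EuclideanSpace ℝ (Fin m), (∫ x, ⟪x, v⟫ * ⟪x, w⟫ ∂μ) = lam * ⟪v, w⟫)
    (L : EuclideanSpace ℝ (Fin m) →L[ℝ] EuclideanSpace ℝ (Fin l))
    (z : EuclideanSpace ℝ (Fin m)) :
    lam * ‖L v‖ ^ 2 ≤ ∫ x, ‖L (z - x)‖ ^ 2 ∂μ := by
  have hint : ∀ {f : EuclideanSpace ℝ (Fin m) → ℝ}, Continuous f → Integrable f μ :=
    fun hf => integrable_of_continuous_of_ball_compl_null hsupp hf
  have hid : Integrable (fun x : EuclideanSpace ℝ (Fin m) => x) μ :=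
    Integrable.of_bound continuous_id.aestronglyMeasurable 1 hsupp
  have hlin : ∫ x, ⟪x, v⟫ ∂μ = 0 := by
    simp_rw [real_inner_comm v]
    rw [integral_inner hid, hbar, inner_zero_right]
  set w := ContinuousLinearMap.adjoint L (L v) with hw
  have hxw : ∀ x, ⟪x, w⟫ = ⟪L x, L v⟫ := fun x => by
    rw [hw, ContinuousLinearMap.adjoint_inner_right]
  have h1 : Integrable (fun x : EuclideanSpace ℝ (Fin m) => (-2 * ⟪L z, L v⟫) * ⟪x, v⟫) μ :=
    hint (by fun_prop)
  have h2 : Integrable (fun x : EuclideanSpace ℝ (Fin m) => 2 * (⟪x, v⟫ * ⟪x, w⟫)) μ :=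
    hint (by fun_prop)
  have h3 : Integrable (fun x : EuclideanSpace ℝ (Fin m) => ‖L v‖ ^ 2 * (⟪x, v⟫ * ⟪x, v⟫)) μ :=
    hint (by fun_prop)
  have h12 : Integrable (fun x : EuclideanSpace ℝ (Fin m) =>
      (-2 * ⟪L z, L v⟫) * ⟪x, v⟫ + 2 * (⟪x, v⟫ * ⟪x, w⟫)) μ := h1.add h2
  have key : ∫ x, ((-2 * ⟪L z, L v⟫) * ⟪x, v⟫ + 2 * (⟪x, v⟫ * ⟪x, w⟫)
      - ‖L v‖ ^ 2 * (⟪x, v⟫ * ⟪x, v⟫)) ∂μ = lam * ‖L v‖ ^ 2 := by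
    rw [integral_sub h12 h3, integral_add h1 h2, integral_const_mul, integral_const_mul,
      integral_const_mul, hlin, hQ, hQ, hxw, real_inner_self_eq_norm_sq,
      real_inner_self_eq_norm_sq, hv]
    ring
  rw [← key]
  refine integral_mono (h12.sub h3) (hint (by fun_prop)) fun x => ?_
  have h0 : 0 ≤ ‖L (z - x) + ⟪x, v⟫ • L v‖ ^ 2 := sq_nonneg _
  rw [norm_add_sq_real, norm_smul, mul_pow, Real.norm_eq_abs, sq_abs, inner_smul_right] at h0
  have h4 : ⟪L (z - x), L v⟫ = ⟪L z, L v⟫ - ⟪x, w⟫ := by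
    rw [hxw, map_sub, inner_sub_left]
  rw [h4] at h0
  simp only
  nlinarith [h0]

/-- Fubini and the weight comparison: a pointwise bound of the directional derivative by an average
over `μ` integrates to a bound by the averaged radial energy. -/
lemma annulus_energy_le_of_pointwise {E F : Type*}
    [NormedAddCommGroup E] [NormedSpace ℝ E] [FiniteDimensional ℝ E]
    [MeasurableSpace E] [BorelSpace E]
    [NormedAddCommGroup F] [NormedSpace ℝ F] [FiniteDimensional ℝ F]
    (m : ℕ) (μ ν : Measure E) [IsFiniteMeasure μ] [SFinite ν]
    (hsupp : ∀ᵐ x ∂μ, ‖x‖ ≤ 1) {lam : ℝ} (hlam : 0 ≤ lam) (v : E) (u : E → F)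
    (hu : IntegrableOn (fun y => ‖fderiv ℝ u y‖ ^ 2) (Metric.ball (0 : E) 20) ν)
    (hpt : ∀ z, lam * ‖fderiv ℝ u z v‖ ^ 2 ≤ ∫ x, ‖fderiv ℝ u z (z - x)‖ ^ 2 ∂μ) :
    lam * (∫ z in Metric.ball (0 : E) 4 \ Metric.ball (0 : E) 3, ‖fderiv ℝ u z v‖ ^ 2 ∂ν)
      ≤ 10 ^ m * ∫ x, (∫ y in Metric.ball x 10 \ Metric.ball x 1,
          ‖fderiv ℝ u y (y - x)‖ ^ 2 * ‖y - x‖ ^ (-(m : ℝ)) ∂ν) ∂μ := by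
  set A : Set E := Metric.ball (0 : E) 4 \ Metric.ball (0 : E) 3
  have hA : MeasurableSet A := measurableSet_ball.diff measurableSet_ball
  -- the region of integration of the radial energy, as a subset of the product
  set S : Set (E × E) := {p | ‖p.2 - p.1‖ < 10 ∧ 1 ≤ ‖p.2 - p.1‖} with hS
  have hSm : MeasurableSet S := by
    have hn : Measurable fun p : E × E => ‖p.2 - p.1‖ := by fun_prop
    exact (measurableSet_lt hn measurable_const).inter (measurableSet_le measurable_const hn)
  let _ : MeasurableSpace F := borel F
  have _ : BorelSpace F := ⟨rfl⟩
  have hD : Measurable fun p : E × E => ‖fderiv ℝ u p.2 (p.2 - p.1)‖ ^ 2 := by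
    have h1 : Measurable fun p : E × E => fderiv ℝ u p.2 :=
      (measurable_fderiv ℝ u).comp measurable_snd
    have h2 : Measurable fun p : E × E => p.2 - p.1 := by fun_prop
    have h3 : Measurable fun q : (E →L[ℝ] F) × E => q.1 q.2 :=
      isBoundedBilinearMap_apply.continuous.measurable
    exact ((h3.comp (h1.prodMk h2)).norm).pow_const 2
  set g : E × E → ℝ := S.indicator
    (fun p => ‖fderiv ℝ u p.2 (p.2 - p.1)‖ ^ 2 * ‖p.2 - p.1‖ ^ (-(m : ℝ))) with hg
  set h : E × E → ℝ := fun p => A.indicator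
    (fun z => ‖fderiv ℝ u z (z - p.1)‖ ^ 2) p.2 with hh
  have hgm : Measurable g := by
    refine Measurable.indicator (hD.mul ?_) hSm
    exact Measurable.pow_const (by fun_prop) _
  have hhm : Measurable h := by
    have : h = (Prod.snd ⁻¹' A).indicator
        (fun p : E × E => ‖fderiv ℝ u p.2 (p.2 - p.1)‖ ^ 2) := by
      rfl
    rw [this]
    exact hD.indicator (measurable_snd hA)
  have hsuppP : ∀ᵐ p ∂(μ.prod ν), ‖p.1‖ ≤ 1 :=
    Measure.quasiMeasurePreserving_fst.ae hsupp
  have hg0 : ∀ p, 0 ≤ g p := fun p => Set.indicator_nonneg (fun _ _ => by positivity) p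
  have hdom : Integrable (fun y : E =>
      100 * (Metric.ball (0 : E) 20).indicator (fun y => ‖fderiv ℝ u y‖ ^ 2) y) ν :=
    ((integrable_indicator_iff measurableSet_ball).mpr hu).const_mul _
  have hgint : Integrable g (μ.prod ν) := by
    refine (hdom.comp_snd μ).mono' hgm.aestronglyMeasurable ?_
    filter_upwards [hsuppP] with p hp
    rw [Real.norm_of_nonneg (hg0 p)]
    by_cases hpS : p ∈ S
    · have hb : p.2 ∈ Metric.ball (0 : E) 20 := by
        rw [mem_ball_zero_iff]
        have := norm_add_le (p.2 - p.1) p.1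
        rw [sub_add_cancel] at this
        linarith [hpS.1]
      rw [hg, Set.indicator_of_mem hpS, Set.indicator_of_mem hb]
      have e1 : ‖p.2 - p.1‖ ^ (-(m : ℝ)) ≤ 1 :=
        Real.rpow_le_one_of_one_le_of_nonpos hpS.2 (by simp)
      have e2 : ‖fderiv ℝ u p.2 (p.2 - p.1)‖ ≤ ‖fderiv ℝ u p.2‖ * 10 :=
        (ContinuousLinearMap.le_opNorm _ _).trans
          (mul_le_mul_of_nonneg_left hpS.1.le (norm_nonneg _))
      calc _ ≤ ‖fderiv ℝ u p.2 (p.2 - p.1)‖ ^ 2 * 1 := by gcongr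
        _ ≤ (‖fderiv ℝ u p.2‖ * 10) ^ 2 * 1 := by gcongr
        _ = _ := by ring
    · rw [hg, Set.indicator_of_notMem hpS]
      exact mul_nonneg (by norm_num) (Set.indicator_nonneg (fun _ _ => by positivity) _)
  have hh0 : ∀ p, 0 ≤ h p := fun p => Set.indicator_nonneg (fun _ _ => by positivity) p.2
  have hhg : ∀ p : E × E, ‖p.1‖ ≤ 1 → h p ≤ 10 ^ m * g p := by
    intro p hp
    by_cases hpA : p.2 ∈ A
    · have h4 : ‖p.2‖ < 4 := by simpa using hpA.1
      have h3 : 3 ≤ ‖p.2‖ := by simpa using hpA.2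
      have hpS : p ∈ S :=
        ⟨by linarith [norm_sub_le p.2 p.1], by linarith [norm_sub_norm_le p.2 p.1]⟩
      have hpos : 0 < ‖p.2 - p.1‖ := by linarith [hpS.2]
      rw [hg, Set.indicator_of_mem hpS]
      simp only [hh]
      rw [Set.indicator_of_mem hpA, Real.rpow_neg hpos.le, Real.rpow_natCast]
      have e : 1 ≤ 10 ^ m * (‖p.2 - p.1‖ ^ m)⁻¹ := by
        rw [← div_eq_mul_inv, one_le_div (by positivity)]
        exact pow_le_pow_left₀ hpos.le hpS.1.le m
      calc _ ≤ ‖fderiv ℝ u p.2 (p.2 - p.1)‖ ^ 2 * (10 ^ m * (‖p.2 - p.1‖ ^ m)⁻¹) :=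
            le_mul_of_one_le_right (by positivity) e
        _ = _ := by ring
    · simp only [hh]
      rw [Set.indicator_of_notMem hpA]
      exact mul_nonneg (by positivity) (hg0 p)
  have hhint : Integrable h (μ.prod ν) := by
    refine (hgint.const_mul (10 ^ m)).mono' hhm.aestronglyMeasurable ?_
    filter_upwards [hsuppP] with p hp
    rw [Real.norm_of_nonneg (hh0 p)]
    exact hhg p hp
  have hpt' : ∀ z, A.indicator (fun z => lam * ‖fderiv ℝ u z v‖ ^ 2) z ≤ ∫ x, h (x, z) ∂μ := by
    intro z
    by_cases hz : z ∈ A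
    · simp only [hh, Set.indicator_of_mem hz]
      exact hpt z
    · simp [hh, Set.indicator_of_notMem hz]
  have hinner : ∀ x, (∫ y in Metric.ball x 10 \ Metric.ball x 1,
      ‖fderiv ℝ u y (y - x)‖ ^ 2 * ‖y - x‖ ^ (-(m : ℝ)) ∂ν) = ∫ y, g (x, y) ∂ν := by
    intro x
    rw [← integral_indicator (measurableSet_ball.diff measurableSet_ball)]
    congr 1
    ext y
    simp only [hg, hS, Set.indicator, Set.mem_sdiff, Metric.mem_ball, dist_eq_norm, not_lt,
      Set.mem_ofPred_eq]
  simp_rw [hinner]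
  rw [← integral_const_mul, ← integral_indicator hA, ← integral_const_mul]
  calc ∫ z, A.indicator (fun z => lam * ‖fderiv ℝ u z v‖ ^ 2) z ∂ν
      ≤ ∫ z, ∫ x, h (x, z) ∂μ ∂ν :=
        integral_mono_of_nonneg
          (Filter.Eventually.of_forall fun z => Set.indicator_nonneg (fun _ _ => by positivity) z)
          hhint.integral_prod_right (Filter.Eventually.of_forall hpt')
    _ = ∫ x, ∫ z, h (x, z) ∂ν ∂μ := (integral_integral_swap (f := fun x z => h (x, z)) hhint).symm
    _ ≤ ∫ x, 10 ^ m * ∫ y, g (x, y) ∂ν ∂μ := by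
        refine integral_mono_ae hhint.integral_prod_left
          (hgint.integral_prod_left.const_mul _) ?_
        filter_upwards [hsupp, hgint.prod_right_ae] with x hx hgx
        rw [← integral_const_mul]
        exact integral_mono_of_nonneg (Filter.Eventually.of_forall fun z => hh0 _)
          (hgx.const_mul _) (Filter.Eventually.of_forall fun z => hhg (x, z) hx)

/-- Let `μ` be a probability measure on the closed unit ball of `ℝᵐ` with
barycenter `0` and second-moment form `Q` with eigenvalue `λ` and unit eigenvector `v`, and
let `u ∈ W^{1,2}(B₁₀(0), ℝˡ)`.  Then there is a dimensional constant `C(m)` with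
`λ ∫_{B₄∖B₃} |v·∇u(z)|² dz ≤ C(m) ∫ W₁(x) dμ(x)`, where
`W₁(x) = ∫_{B₁₀(x)∖B₁(x)} |(y-x)·∇u(y)|² |y-x|^{-m} dy`. -/
theorem eigen_directional_energy_le_radial_energy (m l : ℕ) :
    ∃ C : ℝ, 0 < C ∧
      ∀ (μ : Measure (EuclideanSpace ℝ (Fin m))), IsProbabilityMeasure μ →
        μ (Metric.closedBall (0 : EuclideanSpace ℝ (Fin m)) 1)ᶜ = 0 →
        (∫ x, x ∂μ) = (0 : EuclideanSpace ℝ (Fin m)) →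
        ∀ (lam : ℝ) (v : EuclideanSpace ℝ (Fin m)), ‖v‖ = 1 →
          (∀ w : EuclideanSpace ℝ (Fin m),
            (∫ x, ⟪x, v⟫ * ⟪x, w⟫ ∂μ) = lam * ⟪v, w⟫) →
          ∀ u : EuclideanSpace ℝ (Fin m) → EuclideanSpace ℝ (Fin l),
            Differentiable ℝ u →
            IntegrableOn (fun y => ‖fderiv ℝ u y‖ ^ 2)
              (Metric.ball (0 : EuclideanSpace ℝ (Fin m)) 20) volume →
            lam * (∫ z in Metric.ball (0 : EuclideanSpace ℝ (Fin m)) 4 \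
                    Metric.ball (0 : EuclideanSpace ℝ (Fin m)) 3,
                  ‖fderiv ℝ u z v‖ ^ 2)
              ≤ C * ∫ x,
                  (∫ y in Metric.ball x 10 \ Metric.ball x 1,
                    ‖fderiv ℝ u y (y - x)‖ ^ 2 * ‖y - x‖ ^ (-(m : ℝ))) ∂μ := by
  refine ⟨10 ^ m, by positivity, ?_⟩
  intro μ hμ hsupp0 hbar lam v hv hQ u _ hu
  have hsupp : ∀ᵐ x ∂μ, ‖x‖ ≤ 1 := by
    filter_upwards [compl_mem_ae_iff.mpr hsupp0] with x hx
    simpa using hx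
  have hlam : 0 ≤ lam := by
    have := hQ v
    rw [real_inner_self_eq_norm_sq, hv] at this
    have h0 : 0 ≤ ∫ x, ⟪x, v⟫ * ⟪x, v⟫ ∂μ := integral_nonneg fun x => mul_self_nonneg _
    linarith
  exact annulus_energy_le_of_pointwise m μ volume hsupp hlam v u hu
    fun z => eigen_mul_norm_sq_le hsupp hbar hv hQ (fderiv ℝ u z) z
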